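/- arXiv:1802.02658 — 2 statements merged into one kernel-verified Lean document; each statement's English description precedes it below -/
import Mathlib

section
/- Let G be a countable discrete group, Γ ⊆ G, and φ ∈ ℓ²(G). Then the following are equivalent: (a) there exist constants 0 < A ≤ B < ∞ with A‖g‖² ≤ ∑_{x∈Γ} |⟨g, λ(x)φ⟩|² ≤ B‖g‖² for all g ∈ ℓ²(G); (b) Γ = G and the family (λ(x)φ)_{x∈G} is a Riesz basis of ℓ²(G), i.e. it satisfies the frame inequalities of (a) with Γ = G and in addition there is a constant C < ∞ such that ∑_{x∈G} |c_x|² ≤ C ‖∑_{x∈G} c_x λ(x)φ‖² for every finitely supported family (c_x)_{x∈G} of complex numbers. -/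
open scoped ENNReal

namespace Stmt11

/-- The frame inequalities with bounds `A, B` for the family of left translates
`(λ(x)φ)_{x ∈ Γ}` of `φ ∈ ℓ²(G)` over a discrete group `G`, where `(λ(x)f)(t) = f(x⁻¹ t)`:
`A‖g‖² ≤ ∑_{x ∈ Γ} |⟨g, λ(x)φ⟩|² ≤ B‖g‖²` for all `g ∈ ℓ²(G)`.  (The outer sum is computed
in `ℝ≥0∞`, so no summability assumption is needed.) -/
def IsTranslationFrame {G : Type*} [Group G] (Γ : Set G) (φ : G → ℂ) (A B : ℝ) : Prop :=
  ∀ g : G → ℂ, Summable (fun t => ‖g t‖ ^ 2) →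
    (ENNReal.ofReal (A * ∑' t, ‖g t‖ ^ 2) ≤
        ∑' x : Γ, (‖∑' t, g t * (starRingEnd ℂ) (φ ((x : G)⁻¹ * t))‖₊ : ℝ≥0∞) ^ 2) ∧
      ∑' x : Γ, (‖∑' t, g t * (starRingEnd ℂ) (φ ((x : G)⁻¹ * t))‖₊ : ℝ≥0∞) ^ 2 ≤
        ENNReal.ofReal (B * ∑' t, ‖g t‖ ^ 2)

noncomputable section helpers

open ContinuousLinearMap

abbrev L2 (G : Type*) := lp (fun _ : G => ℂ) 2

lemma memlp_iff {G : Type*} (f : G → ℂ) :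
    Memℓp f 2 ↔ Summable (fun t => ‖f t‖ ^ 2) := by
  rw [memℓp_gen_iff (by norm_num)]
  simp

lemma norm_sq_L2 {G : Type*} (f : L2 G) : ‖f‖ ^ 2 = ∑' t, ‖f t‖ ^ 2 := by
  have h := lp.norm_rpow_eq_tsum (p := 2) (by norm_num) f
  simpa using h

lemma summable_L2 {G : Type*} (f : L2 G) : Summable (fun t => ‖f t‖ ^ 2) :=
  (memlp_iff _).1 f.2

/-- The element of `ℓ²` given by a square-summable function. -/
def mk2 {G : Type*} (f : G → ℂ) (h : Summable (fun t => ‖f t‖ ^ 2)) : L2 G :=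
  ⟨f, (memlp_iff f).2 h⟩

@[simp] lemma mk2_apply {G : Type*} (f : G → ℂ) (h : Summable (fun t => ‖f t‖ ^ 2)) (t : G) :
    mk2 f h t = f t := rfl

open Classical in
/-- The Dirac function. -/
def dl {G : Type*} (x : G) : L2 G := lp.single 2 x (1 : ℂ)

lemma inner_dl {G : Type*} (x : G) (f : L2 G) : inner ℂ (dl x) f = f x := by
  classical
  rw [dl, lp.inner_single_left]; simp

lemma inner_dl_right {G : Type*} (x : G) (f : L2 G) :
    inner ℂ f (dl x) = (starRingEnd ℂ) (f x) := by
  rw [← inner_dl x f, inner_conj_symm]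

lemma dl_self {G : Type*} (x : G) : dl x x = 1 := by
  classical
  rw [dl, lp.single_apply_self]

lemma dl_ne {G : Type*} {x y : G} (h : y ≠ x) : dl x y = 0 := by
  classical
  rw [dl, lp.single_apply_ne _ _ _ h]

lemma inner_self_L2 {G : Type*} (f : L2 G) : inner ℂ f f = ((‖f‖ ^ 2 : ℝ) : ℂ) := by
  rw [inner_self_eq_norm_sq_to_K]; simp

lemma norm_dl {G : Type*} (x : G) : ‖dl x‖ = 1 := by
  have h := inner_self_L2 (dl x)
  rw [inner_dl, dl_self] at h
  have h2 : ‖dl x‖ ^ 2 = 1 := by exact_mod_cast h.symm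
  nlinarith [norm_nonneg (dl x)]

variable {G : Type*} [Group G]

/-- Left translation on `ℓ²(G)`. -/
def tr (x : G) (f : L2 G) : L2 G :=
  mk2 (fun t => f (x⁻¹ * t)) (((Equiv.mulLeft x⁻¹).summable_iff).2 (summable_L2 f))

@[simp] lemma tr_apply (x : G) (f : L2 G) (t : G) : tr x f t = f (x⁻¹ * t) := rfl

lemma tr_dl (x : G) : tr x (dl 1) = dl x := by
  ext t
  rw [tr_apply]
  by_cases h : t = x
  · subst h; simp [dl_self]
  · rw [dl_ne h, dl_ne]
    intro h2
    exact h (by rw [inv_mul_eq_one] at h2; exact h2.symm)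

lemma tr_inv (x : G) (f : L2 G) : tr x (tr x⁻¹ f) = f := by
  ext t; simp

lemma inner_tr (x : G) (f g : L2 G) : inner ℂ (tr x f) g = inner ℂ f (tr x⁻¹ g) := by
  rw [lp.inner_eq_tsum, lp.inner_eq_tsum, ← (Equiv.mulLeft x).tsum_eq]
  simp

/-- Equivariance. -/
def Eqv (S : L2 G →L[ℂ] L2 G) : Prop := ∀ x f, S (tr x f) = tr x (S f)

lemma Eqv.adjoint {S : L2 G →L[ℂ] L2 G} (h : Eqv S) : Eqv (adjoint S) := by
  intro x f
  refine ext_inner_right ℂ fun g => ?_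
  rw [adjoint_inner_left, inner_tr, inner_tr, adjoint_inner_left, h]

lemma trace_aux {X : L2 G →L[ℂ] L2 G} (h : Eqv X) (x : G) :
    X (dl 1) x = (starRingEnd ℂ) (adjoint X (dl 1) x⁻¹) := by
  rw [← inner_dl x, ← adjoint_inner_left, ← tr_dl, h.adjoint, inner_tr, tr_dl, inner_dl_right]

lemma trace_swap {S X : L2 G →L[ℂ] L2 G} (hS : Eqv S) (hX : Eqv X) :
    inner ℂ (dl 1) (S (X (dl 1))) = inner ℂ (dl 1) (X (S (dl 1))) := by
  rw [← adjoint_inner_left S (X (dl 1)), ← adjoint_inner_left X (S (dl 1)), lp.inner_eq_tsum, lp.inner_eq_tsum,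
    ← (Equiv.inv G).tsum_eq]
  refine tsum_congr fun x => ?_
  rw [Equiv.inv_apply, trace_aux hX, trace_aux hS]
  simp [mul_comm]

lemma tr_add (x : G) (f g : L2 G) : tr x (f + g) = tr x f + tr x g := by
  ext t; simp

lemma tr_sub (x : G) (f g : L2 G) : tr x (f - g) = tr x f - tr x g := by
  ext t; simp

lemma tr_smul (x : G) (c : ℂ) (f : L2 G) : tr x (c • f) = c • tr x f := by
  ext t; simp

set_option maxHeartbeats 1000000 in
/-- For injective equivariant `S`, `δ` is a limit of elements in the range of `S`. -/
lemma approx_dl {S : L2 G →L[ℂ] L2 G} (hS : Eqv S) (hinj : ∀ f, S f = 0 → f = 0)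
    (η : ℝ) (hη : 0 < η) : ∃ w, ‖dl (1 : G) - S w‖ ^ 2 ≤ 2 * η := by
  set N : L2 G →L[ℂ] L2 G := adjoint S ∘L S with hN
  have hNap : ∀ f, N f = adjoint S (S f) := fun f => rfl
  have hNsym : ∀ f g, inner ℂ (N f) g = inner ℂ f (N g) := fun f g => by
    rw [hNap, hNap, adjoint_inner_left, adjoint_inner_right]
  have hNpos : ∀ f, inner ℂ f (N f) = ((‖S f‖ ^ 2 : ℝ) : ℂ) := fun f => by
    rw [hNap, adjoint_inner_right, inner_self_eq_norm_sq_to_K]; simp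
  have hNeqv : Eqv N := fun x f => by rw [hNap, hNap, hS, hS.adjoint]
  -- dense range of N
  have hdense : N.range.topologicalClosure = ⊤ := by
    rw [Submodule.topologicalClosure_eq_top_iff, Submodule.eq_bot_iff]
    intro k hk
    apply hinj
    have h1 : inner ℂ (N k) k = 0 := hk (N k) ⟨k, rfl⟩
    rw [hNsym, hNpos] at h1
    have h2 : ‖S k‖ ^ 2 = 0 := by exact_mod_cast h1
    simpa using h2
  have hmem : dl (1 : G) ∈ closure (N.range : Set (L2 G)) := by
    have : dl (1 : G) ∈ N.range.topologicalClosure := by rw [hdense]; trivial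
    exact this
  obtain ⟨_, ⟨y, rfl⟩, hy⟩ := Metric.mem_closure_iff.1 hmem η hη
  rw [dist_eq_norm] at hy
  replace hy : ‖dl 1 - N y‖ < η := hy
  -- choose ε
  obtain ⟨ε, hε, hεy⟩ : ∃ ε : ℝ, 0 < ε ∧ 2 * ε * ‖y‖ ≤ η := by
    refine ⟨η / (2 * (‖y‖ + 1)), by positivity, ?_⟩
    have : 0 < ‖y‖ + 1 := by positivity
    field_simp
    nlinarith [norm_nonneg y]
  set Z : L2 G →L[ℂ] L2 G := N + (ε : ℂ) • ContinuousLinearMap.id ℂ (L2 G) with hZ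
  have hZap : ∀ f, Z f = N f + (ε : ℂ) • f := fun f => rfl
  have hZeqv : Eqv Z := fun x f => by rw [hZap, hZap, hNeqv, tr_add, tr_smul]
  have hZunit : IsUnit Z := by
    refine isUnit_of_forall_le_norm_inner_map Z (c := ⟨ε, hε.le⟩) hε fun f => ?_
    refine le_trans ?_ (RCLike.re_le_norm _)
    rw [hZap, inner_add_left, hNsym, hNpos, inner_smul_left, inner_self_L2]
    have : 0 ≤ ‖S f‖ ^ 2 := by positivity
    rw [Complex.conj_ofReal, ← Complex.ofReal_mul, ← Complex.ofReal_add]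
    change ‖f‖ ^ 2 * ε ≤ ‖S f‖ ^ 2 + ε * ‖f‖ ^ 2
    linarith
  obtain ⟨u, hu⟩ := hZunit
  set I : L2 G →L[ℂ] L2 G := ↑u⁻¹ with hI
  have hZI : ∀ f, Z (I f) = f := fun f => by
    have : (↑u * ↑u⁻¹ : L2 G →L[ℂ] L2 G) f = f := by rw [u.mul_inv]; rfl
    rw [hu] at this; exact this
  have hIZ : ∀ f, I (Z f) = f := fun f => by
    have : (↑u⁻¹ * ↑u : L2 G →L[ℂ] L2 G) f = f := by rw [u.inv_mul]; rfl
    rw [hu] at this; exact this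
  have hIeqv : Eqv I := fun x f => by
    conv_lhs => rw [← hZI f, ← hZeqv, hIZ]
  set X : L2 G →L[ℂ] L2 G := I ∘L adjoint S with hX
  have hXap : ∀ f, X f = I (adjoint S f) := fun f => rfl
  have hXeqv : Eqv X := fun x f => by rw [hXap, hXap, hS.adjoint, hIeqv]
  have htr := trace_swap hS hXeqv
  set w := X (dl 1) with hw
  have hZw : N w + (ε : ℂ) • w = adjoint S (dl 1) := by rw [← hZap, hw, hXap, hZI]
  -- v
  set v := (ε : ℂ) • I (dl 1) with hv
  have hNv : N v = (ε : ℂ) • (dl 1 - v) := by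
    have h1 : Z v = (ε : ℂ) • dl 1 := by rw [hv, map_smul, hZI]
    rw [hZap] at h1
    rw [smul_sub, ← h1]; abel
  have hXS : X (S (dl 1)) = dl 1 - v := by
    rw [hXap, ← hNap]
    have h1 : N (dl 1) = Z (dl 1) - (ε : ℂ) • dl 1 := by rw [hZap]; abel
    rw [h1, map_sub, hIZ, map_smul]
  -- ‖v‖ ≤ 1
  have hv1 : ‖v‖ ≤ 1 := by
    have h1 : inner ℂ v (N v) = (ε : ℂ) * (inner ℂ v (dl 1) - inner ℂ v v) := by
      rw [hNv, inner_smul_right, inner_sub_right]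
    rw [hNpos, inner_self_L2] at h1
    have h2 := congrArg Complex.re h1
    rw [Complex.ofReal_re, Complex.re_ofReal_mul, Complex.sub_re, Complex.ofReal_re] at h2
    have h3 : (inner ℂ v (dl (1 : G))).re ≤ ‖v‖ := by
      refine (Complex.re_le_norm _).trans ((norm_inner_le_norm _ _).trans ?_)
      rw [norm_dl, mul_one]
    have h5 : 0 ≤ ‖S v‖ ^ 2 := by positivity
    have h6 : 0 ≤ (inner ℂ v (dl (1 : G))).re - ‖v‖ ^ 2 := by
      by_contra hc
      push Not at hc
      nlinarith
    by_contra hc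
    push Not at hc
    nlinarith
  have hdv : ‖inner ℂ (dl (1 : G)) v‖ ≤ 2 * η := by
    have h1 : inner ℂ (dl (1 : G)) v = inner ℂ (dl 1 - N y) v + inner ℂ y (N v) := by
      rw [inner_sub_left, hNsym]; ring
    rw [h1]
    have h2 : ‖inner ℂ (dl 1 - N y) v‖ ≤ η := by
      refine (norm_inner_le_norm _ _).trans ?_
      nlinarith [norm_nonneg v, norm_nonneg (dl 1 - N y)]
    have h3 : ‖inner ℂ y (N v)‖ ≤ η := by
      refine (norm_inner_le_norm _ _).trans ?_
      have h4 : ‖N v‖ ≤ ε * 2 := by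
        rw [hNv, norm_smul, Complex.norm_real, Real.norm_of_nonneg hε.le]
        refine mul_le_mul_of_nonneg_left ?_ hε.le
        refine (norm_sub_le _ _).trans ?_
        rw [norm_dl]; linarith
      nlinarith [norm_nonneg y]
    refine (norm_add_le _ _).trans (by linarith)
  have hre : 1 - 2 * η ≤ (inner ℂ (dl (1 : G)) (S w)).re := by
    rw [htr, hXS, inner_sub_right, inner_dl, dl_self, Complex.sub_re, Complex.one_re]
    have := (Complex.re_le_norm _).trans hdv
    linarith
  have hSw : ‖S w‖ ^ 2 ≤ (inner ℂ (dl (1 : G)) (S w)).re := by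
    have h1 : inner ℂ w (N w) = inner ℂ (S w) (dl 1) - (ε : ℂ) * inner ℂ w w := by
      rw [← adjoint_inner_right S w, ← hZw, inner_add_right, inner_smul_right]; ring
    rw [hNpos, inner_self_L2] at h1
    have h2 := congrArg Complex.re h1
    rw [Complex.ofReal_re, Complex.sub_re, Complex.re_ofReal_mul, Complex.ofReal_re] at h2
    have h5 : (inner ℂ (dl (1 : G)) (S w)).re = (inner ℂ (S w) (dl (1 : G))).re := by
      rw [← inner_conj_symm, Complex.conj_re]
    rw [h5, h2]
    have : 0 ≤ ε * ‖w‖ ^ 2 := by positivity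
    linarith
  refine ⟨w, ?_⟩
  rw [norm_sub_sq (𝕜 := ℂ), norm_dl]
  change 1 ^ 2 - 2 * (inner ℂ (dl (1 : G)) (S w)).re + _ ≤ _
  linarith

/-- Finiteness: an injective equivariant operator has dense range. -/
lemma finiteness {S : L2 G →L[ℂ] L2 G} (hS : Eqv S) (hinj : ∀ f, S f = 0 → f = 0)
    (k : L2 G) (hk : ∀ f, inner ℂ (S f) k = 0) : k = 0 := by
  ext x
  have h1 : k x = inner ℂ (dl 1) (tr x⁻¹ k) := by
    rw [← inner_dl x k, ← tr_dl, inner_tr]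
  have hk' : ∀ f, inner ℂ (S f) (tr x⁻¹ k) = 0 := fun f => by
    rw [← inner_tr, ← hS, hk]
  set k' := tr x⁻¹ k
  rw [h1]
  change inner ℂ (dl 1) k' = 0
  rw [← norm_eq_zero]
  by_contra hne
  have hpos : 0 < ‖inner ℂ (dl 1) k'‖ := lt_of_le_of_ne (norm_nonneg _) (Ne.symm hne)
  have hkpos : 0 < ‖k'‖ := by
    rw [norm_pos_iff]; rintro h; rw [h] at hpos; simp at hpos
  obtain ⟨w, hw⟩ := approx_dl hS hinj (‖inner ℂ (dl 1) k'‖ ^ 2 / ‖k'‖ ^ 2 / 4) (by positivity)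
  have h2 : inner ℂ (dl 1) k' = inner ℂ (dl 1 - S w) k' := by
    rw [inner_sub_left, hk', sub_zero]
  have h3 : ‖inner ℂ (dl 1) k'‖ ≤ ‖dl 1 - S w‖ * ‖k'‖ := by
    rw [h2]; exact norm_inner_le_norm _ _
  have h4 : ‖inner ℂ (dl 1) k'‖ ^ 2 ≤ ‖dl 1 - S w‖ ^ 2 * ‖k'‖ ^ 2 := by
    rw [← mul_pow]; gcongr
  have h5 : ‖dl 1 - S w‖ ^ 2 * ‖k'‖ ^ 2 ≤ ‖inner ℂ (dl 1) k'‖ ^ 2 / 2 := by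
    calc _ ≤ 2 * (‖inner ℂ (dl 1) k'‖ ^ 2 / ‖k'‖ ^ 2 / 4) * ‖k'‖ ^ 2 := by gcongr
      _ = _ := by field_simp; norm_num
  nlinarith [pow_pos hpos 2]

/-- `ψ_t(x) = conj φ(x⁻¹ t)`. -/
def psi (φ : L2 G) (t : G) : L2 G :=
  mk2 (fun x => (starRingEnd ℂ) (φ (x⁻¹ * t))) (by
    have h := ((Equiv.inv G).trans (Equiv.mulRight t)).summable_iff.2 (summable_L2 φ)
    simpa [Function.comp_def] using h)

@[simp] lemma psi_apply (φ : L2 G) (t x : G) :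
    psi φ t x = (starRingEnd ℂ) (φ (x⁻¹ * t)) := rfl

lemma tr_psi (φ : L2 G) (x t : G) : tr x (psi φ t) = psi φ (x * t) := by
  ext y; simp [mul_assoc]

/-- Injectivity of convolution by `φ`, given a bounded right inverse. -/
lemma conv_injective (φ : L2 G) (R : L2 G →L[ℂ] L2 G)
    (hR : ∀ b t, inner ℂ (psi φ t) (R b) = b t)
    (k : L2 G) (hk : ∀ t, inner ℂ (psi φ t) k = 0) : k = 0 := by
  set K : Submodule ℂ (L2 G) := (Submodule.span ℂ (Set.range (psi φ)))ᗮ with hKdef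
  have hK : ∀ c, c ∈ K ↔ ∀ t, inner ℂ (psi φ t) c = 0 := by
    intro c
    constructor
    · intro h t
      exact h _ (Submodule.subset_span ⟨t, rfl⟩)
    · intro h f hf
      induction hf using Submodule.span_induction with
      | mem x hx => obtain ⟨t, rfl⟩ := hx; exact h t
      | zero => simp
      | add x y _ _ hx hy => rw [inner_add_left, hx, hy, add_zero]
      | smul a x _ hx => rw [inner_smul_left, hx, mul_zero]
  have hKtr : ∀ x c, c ∈ K → tr x c ∈ K := by
    intro x c hc
    rw [hK] at hc ⊢
    intro t
    have := inner_tr x⁻¹ (psi φ t) c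
    rw [inv_inv] at this
    rw [← this, tr_psi, hc]
  set S : L2 G →L[ℂ] L2 G := R - K.starProjection ∘L R with hSdef
  have hSap : ∀ b, S b = R b - K.starProjection (R b) := fun b => rfl
  have hSperp : ∀ b, S b ∈ Kᗮ := fun b => by
    rw [hSap]; exact Submodule.sub_starProjection_mem_orthogonal _
  have hSconv : ∀ b t, inner ℂ (psi φ t) (S b) = b t := fun b t => by
    rw [hSap, inner_sub_right, hR, (hK _).1 (Submodule.starProjection_apply_mem _ _), sub_zero]
  have hSinj : ∀ f, S f = 0 → f = 0 := fun f hf => by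
    ext t
    rw [← hSconv, hf, inner_zero_right]; rfl
  have hSeqv : Eqv S := by
    intro x b
    rw [← sub_eq_zero]
    have h1 : S (tr x b) - tr x (S b) ∈ K := by
      rw [hK]
      intro t
      have := inner_tr x⁻¹ (psi φ t) (S b)
      rw [inv_inv] at this
      rw [inner_sub_right, hSconv, ← this, tr_psi, hSconv, tr_apply, sub_self]
    have h2 : S (tr x b) - tr x (S b) ∈ Kᗮ := by
      refine Submodule.sub_mem _ (hSperp _) ?_
      intro f hf
      have := inner_tr x⁻¹ f (S b)
      rw [inv_inv] at this
      rw [← this]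
      exact hSperp b _ (hKtr _ _ hf)
    have := h2 _ h1
    exact inner_self_eq_zero.1 this
  refine finiteness hSeqv hSinj k fun f => ?_
  rw [← inner_conj_symm, hSperp f k ((hK k).2 hk), map_zero]

open Classical in
/-- Coefficients of the analysis operator. -/
def coeff (Γ : Set G) (φ g : L2 G) (x : G) : ℂ := if x ∈ Γ then inner ℂ (tr x φ) g else 0

lemma frame_real (Γ : Set G) (φ : L2 G) {A B : ℝ} (hA : 0 < A) (hAB : A ≤ B)
    (h : IsTranslationFrame Γ φ A B) (g : L2 G) :
    Summable (fun x => ‖coeff Γ φ g x‖ ^ 2) ∧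
      A * ‖g‖ ^ 2 ≤ ∑' x, ‖coeff Γ φ g x‖ ^ 2 ∧
      ∑' x, ‖coeff Γ φ g x‖ ^ 2 ≤ B * ‖g‖ ^ 2 := by
  have h0 := h g (summable_L2 g)
  have key : ∑' x : Γ, (‖∑' t, g t * (starRingEnd ℂ) (φ ((x : G)⁻¹ * t))‖₊ : ℝ≥0∞) ^ 2 =
      ∑' x : G, ENNReal.ofReal (‖coeff Γ φ g x‖ ^ 2) := by
    rw [tsum_subtype Γ
      (fun x : G => (‖∑' t, g t * (starRingEnd ℂ) (φ ((x : G)⁻¹ * t))‖₊ : ℝ≥0∞) ^ 2)]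
    refine tsum_congr fun x => ?_
    by_cases hx : x ∈ Γ
    · rw [Set.indicator_of_mem hx, coeff, if_pos hx, lp.inner_eq_tsum,
        ENNReal.ofReal_pow (norm_nonneg _), ofReal_norm]
      simp [enorm]
    · rw [Set.indicator_of_notMem hx, coeff, if_neg hx]
      simp
  rw [key, ← norm_sq_L2] at h0
  have hnn : ∀ x, 0 ≤ ‖coeff Γ φ g x‖ ^ 2 := fun x => by positivity
  have hsum : Summable (fun x => ‖coeff Γ φ g x‖ ^ 2) := by
    have hne : ∑' x : G, ENNReal.ofReal (‖coeff Γ φ g x‖ ^ 2) ≠ ⊤ :=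
      ne_top_of_le_ne_top ENNReal.ofReal_ne_top h0.2
    have := ENNReal.summable_toReal hne
    refine this.congr fun x => ?_
    exact ENNReal.toReal_ofReal (hnn x)
  rw [← ENNReal.ofReal_tsum_of_nonneg hnn hsum] at h0
  refine ⟨hsum, ?_, ?_⟩
  · exact (ENNReal.ofReal_le_ofReal_iff (tsum_nonneg hnn)).1 h0.1
  · exact (ENNReal.ofReal_le_ofReal_iff
      (mul_nonneg (hA.le.trans hAB) (by positivity))).1 h0.2

lemma exists_right_inverse (Γ : Set G) (φ : L2 G) {A B : ℝ} (hA : 0 < A) (hAB : A ≤ B)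
    (h : IsTranslationFrame Γ φ A B) :
    ∃ R : L2 G →L[ℂ] L2 G, (∀ b t, inner ℂ (psi φ t) (R b) = b t) ∧
      ∀ b x, x ∉ Γ → R b x = 0 := by
  have hf := frame_real Γ φ hA hAB h
  let T₀ : L2 G →ₗ[ℂ] L2 G :=
    { toFun := fun g => mk2 (coeff Γ φ g) (hf g).1
      map_add' := fun f g => by
        ext x
        by_cases hx : x ∈ Γ <;> simp [coeff, hx]
      map_smul' := fun c f => by
        ext x
        by_cases hx : x ∈ Γ <;> simp [coeff, hx] }
  have hT0 : ∀ g, ‖T₀ g‖ ^ 2 = ∑' x, ‖coeff Γ φ g x‖ ^ 2 := fun g => norm_sq_L2 _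
  let T : L2 G →L[ℂ] L2 G := T₀.mkContinuous (Real.sqrt B) (fun g => by
    have hB : 0 ≤ B := hA.le.trans hAB
    refine abs_le_of_sq_le_sq' ?_ (by positivity) |>.2
    rw [hT0, mul_pow, Real.sq_sqrt hB]
    exact (hf g).2.2)
  have hT : ∀ g x, T g x = coeff Γ φ g x := fun g x => rfl
  have hTlow : ∀ g, A * ‖g‖ ^ 2 ≤ ‖T g‖ ^ 2 := fun g => by
    refine (hf g).2.1.trans (le_of_eq ?_)
    exact (hT0 g).symm
  have hunit : IsUnit (adjoint T ∘L T) := by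
    refine isUnit_of_forall_le_norm_inner_map _ (c := ⟨A, hA.le⟩) hA fun g => ?_
    rw [ContinuousLinearMap.comp_apply, adjoint_inner_left, inner_self_eq_norm_sq_to_K]
    have := hTlow g
    simp only [norm_pow, RCLike.norm_ofReal, abs_norm]
    change ‖g‖ ^ 2 * A ≤ _
    linarith
  obtain ⟨u, hu⟩ := hunit
  set I : L2 G →L[ℂ] L2 G := ↑u⁻¹ with hI
  have hMI : ∀ f, adjoint T (T (I f)) = f := fun f => by
    have : (↑u * ↑u⁻¹ : L2 G →L[ℂ] L2 G) f = f := by rw [u.mul_inv]; rfl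
    rw [hu] at this; exact this
  have hsupp : ∀ b x, x ∉ Γ → (T ∘L I) b x = 0 := fun b x hx => by
    rw [ContinuousLinearMap.comp_apply, hT, coeff, if_neg hx]
  refine ⟨T ∘L I, fun b t => ?_, hsupp⟩
  have h1 : inner ℂ (psi φ t) ((T ∘L I) b) = inner ℂ (T (dl t)) ((T ∘L I) b) := by
    rw [lp.inner_eq_tsum, lp.inner_eq_tsum]
    refine tsum_congr fun x => ?_
    by_cases hx : x ∈ Γ
    · rw [hT, coeff, if_pos hx, inner_dl_right]; rfl
    · rw [hsupp b x hx, inner_zero_right, inner_zero_right]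
  rw [h1, ← adjoint_inner_right, ContinuousLinearMap.comp_apply, hMI, inner_dl]

end helpers

/-- For a countable discrete group `G`, `Γ ⊆ G` and `φ ∈ ℓ²(G)`, the translates
`(λ(x)φ)_{x ∈ Γ}` form a frame of `ℓ²(G)` if and only if `Γ = G` and `(λ(x)φ)_{x ∈ G}` is a
Riesz basis of `ℓ²(G)`, i.e. a frame which in addition satisfies
`∑_{x} |c_x|² ≤ C ‖∑_x c_x λ(x)φ‖²` for every finitely supported family `(c_x)` of complex
scalars. -/
theorem frame_iff_riesz_basis {G : Type*} [Group G] [Countable G]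
    (Γ : Set G) (φ : G → ℂ) (hφ : Summable (fun t => ‖φ t‖ ^ 2)) :
    (∃ A B : ℝ, 0 < A ∧ A ≤ B ∧ IsTranslationFrame Γ φ A B) ↔
      (Γ = Set.univ ∧ (∃ A B : ℝ, 0 < A ∧ A ≤ B ∧ IsTranslationFrame Set.univ φ A B) ∧
        ∃ C : ℝ, ∀ c : G →₀ ℂ,
          (∑ x ∈ c.support, ‖c x‖ ^ 2) ≤
            C * ∑' t : G, ‖∑ x ∈ c.support, c x * φ (x⁻¹ * t)‖ ^ 2) := by
  constructor
  · rintro ⟨A, B, hA, hAB, h⟩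
    set Φ : L2 G := mk2 φ hφ with hΦ
    obtain ⟨R, hR, hsupp⟩ := exists_right_inverse Γ Φ hA hAB h
    have hinj := conv_injective Φ R hR
    have hdl : ∀ x t, inner ℂ (psi Φ t) (dl x) = φ (x⁻¹ * t) := fun x t => by
      rw [inner_dl_right, psi_apply, Complex.conj_conj]; rfl
    have huniv : Γ = Set.univ := by
      rw [Set.eq_univ_iff_forall]
      intro x
      by_contra hx
      have h0 : R (tr x Φ) - dl x = 0 := hinj _ fun t => by
        rw [inner_sub_right, hR, hdl, tr_apply]
        exact sub_self _
      have h1 := hsupp (tr x Φ) x hx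
      rw [sub_eq_zero.1 h0, dl_self] at h1
      exact one_ne_zero h1
    refine ⟨huniv, ⟨A, B, hA, hAB, huniv ▸ h⟩, ‖R‖ ^ 2, fun c => ?_⟩
    set b : L2 G := ∑ x ∈ c.support, c x • tr x Φ with hb
    have hbt : ∀ t, b t = ∑ x ∈ c.support, c x * φ (x⁻¹ * t) := fun t => by
      rw [← inner_dl, hb, inner_sum]
      refine Finset.sum_congr rfl fun x _ => ?_
      rw [inner_smul_right, inner_dl]; rfl
    set d : L2 G := ∑ x ∈ c.support, c x • dl x with hd
    have hdx : ∀ y, d y = c y := fun y => by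
      classical
      rw [← inner_dl, hd, inner_sum]
      have : ∀ x ∈ c.support, inner ℂ (dl y) (c x • dl x) = if x = y then c y else 0 := by
        intro x _
        rw [inner_smul_right, inner_dl]
        split_ifs with hxy
        · rw [hxy, dl_self, mul_one]
        · rw [dl_ne (Ne.symm hxy), mul_zero]
      rw [Finset.sum_congr rfl this, Finset.sum_ite_eq']
      split_ifs with hy
      · rfl
      · exact (Finsupp.notMem_support_iff.1 hy).symm
    have h0 : R b - d = 0 := hinj _ fun t => by
      rw [inner_sub_right, hR, hbt, hd, inner_sum, sub_eq_zero]
      refine Finset.sum_congr rfl fun x _ => ?_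
      rw [inner_smul_right, hdl]
    have hnd : ‖d‖ ^ 2 = ∑ x ∈ c.support, ‖c x‖ ^ 2 := by
      rw [norm_sq_L2, tsum_eq_sum (s := c.support)]
      · exact Finset.sum_congr rfl fun x _ => by rw [hdx]
      · intro x hx
        rw [hdx, Finsupp.notMem_support_iff.1 hx]; simp
    have hnb : ‖b‖ ^ 2 = ∑' t : G, ‖∑ x ∈ c.support, c x * φ (x⁻¹ * t)‖ ^ 2 := by
      rw [norm_sq_L2]
      exact tsum_congr fun t => by rw [hbt]
    rw [← hnd, ← hnb, ← sub_eq_zero.1 h0, ← mul_pow]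
    exact pow_le_pow_left₀ (norm_nonneg _) (R.le_opNorm b) 2
  · rintro ⟨rfl, h, -⟩
    exact h

end Stmt11
end

section
/- Let 𝔤 be a finite-dimensional real Lie algebra which is not of type R, i.e. there exists X ∈ 𝔤 such that the complexification of the adjoint endomorphism ad(X) : 𝔤 → 𝔤 has an eigenvalue μ ∈ ℂ with Re(μ) ≠ 0. Then 𝔤 contains a Lie subalgebra isomorphic either to the ax+b algebra or to a Grélaud algebra; concretely, either (Case 1) there exist A, Y ∈ 𝔤 with Y ≠ 0 and ⁅A,Y⁆ = Y, or (Case 2) there exist a real number β ≠ 0 and linearly independent A, Y₁, Y₂ ∈ 𝔤 with ⁅A,Y₁⁆ = Y₁ + β·Y₂, ⁅A,Y₂⁆ = −β·Y₁ + Y₂, and ⁅Y₁,Y₂⁆ = 0. -/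
open TensorProduct

namespace Stmt17

/-- The real (resp. imaginary) part on `ℂ ⊗ L`, given by a real functional on `ℂ`. -/
noncomputable def part {L : Type*} [AddCommGroup L] [Module ℝ L] (φ : ℂ →ₗ[ℝ] ℝ) :
    ℂ ⊗[ℝ] L →ₗ[ℝ] L :=
  (TensorProduct.lid ℝ L).toLinearMap ∘ₗ LinearMap.rTensor L φ

lemma part_tmul {L : Type*} [AddCommGroup L] [Module ℝ L] (φ : ℂ →ₗ[ℝ] ℝ) (c : ℂ) (y : L) :
    part φ (c ⊗ₜ[ℝ] y) = φ c • y := by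
  simp [part]

lemma part_baseChange {L : Type*} [AddCommGroup L] [Module ℝ L] (φ : ℂ →ₗ[ℝ] ℝ)
    (f : L →ₗ[ℝ] L) (z : ℂ ⊗[ℝ] L) :
    part φ (LinearMap.baseChange ℂ f z) = f (part φ z) := by
  induction z with
  | zero => simp
  | tmul c y => simp [part_tmul]
  | add a b ha hb => simp [ha, hb]

lemma part_re_smul {L : Type*} [AddCommGroup L] [Module ℝ L] (m : ℂ) (z : ℂ ⊗[ℝ] L) :
    part Complex.reLm (m • z) = m.re • part Complex.reLm z - m.im • part Complex.imLm z := by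
  induction z with
  | zero => simp
  | tmul c y => simp [TensorProduct.smul_tmul', part_tmul, sub_smul, mul_smul]
  | add a b ha hb => simp only [smul_add, map_add, ha, hb]; abel

lemma part_im_smul {L : Type*} [AddCommGroup L] [Module ℝ L] (m : ℂ) (z : ℂ ⊗[ℝ] L) :
    part Complex.imLm (m • z) = m.im • part Complex.reLm z + m.re • part Complex.imLm z := by
  induction z with
  | zero => simp
  | tmul c y =>
    simp [TensorProduct.smul_tmul', part_tmul, add_smul, mul_smul, add_comm]
  | add a b ha hb => simp only [smul_add, map_add, ha, hb]; abel

lemma part_decomp {L : Type*} [AddCommGroup L] [Module ℝ L] (z : ℂ ⊗[ℝ] L) :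
    z = (1 : ℂ) ⊗ₜ[ℝ] part Complex.reLm z + Complex.I ⊗ₜ[ℝ] part Complex.imLm z := by
  induction z with
  | zero => simp
  | tmul c y =>
    rw [part_tmul, part_tmul, ← TensorProduct.smul_tmul, ← TensorProduct.smul_tmul,
      ← TensorProduct.add_tmul]
    congr 1
    apply Complex.ext <;> simp
  | add a b ha hb =>
    conv_lhs => rw [ha, hb]
    simp only [map_add, TensorProduct.tmul_add]
    abel

lemma eq_zero_pair {L : Type*} [AddCommGroup L] [Module ℝ L] {s t : ℝ} {u v : L}
    (h1 : s • u + t • v = 0) (h2 : (-t) • u + s • v = 0) :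
    (s = 0 ∧ t = 0) ∨ (u = 0 ∧ v = 0) := by
  have e1 : (s * s + t * t) • u = 0 := by
    have : (s * s + t * t) • u = s • (s • u + t • v) - t • ((-t) • u + s • v) := by module
    rw [this, h1, h2]; simp
  have e2 : (s * s + t * t) • v = 0 := by
    have : (s * s + t * t) • v = t • (s • u + t • v) + s • ((-t) • u + s • v) := by module
    rw [this, h1, h2]; simp
  by_cases hh : s * s + t * t = 0
  · left; constructor <;> nlinarith [mul_self_nonneg s, mul_self_nonneg t]
  · right
    exact ⟨(smul_eq_zero.mp e1).resolve_left hh, (smul_eq_zero.mp e2).resolve_left hh⟩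


/-- Let `𝔤` be a finite-dimensional real Lie algebra which is not of type R, i.e. there is
`X ∈ 𝔤` such that the complexification of `ad(X)` has an eigenvalue `μ` with `Re μ ≠ 0`.
Then `𝔤` contains a Lie subalgebra isomorphic either to the `ax+b` algebra or to a Grélaud
algebra: either there are `A, Y ∈ 𝔤` with `Y ≠ 0` and `⁅A,Y⁆ = Y`, or there are a real
number `β ≠ 0` and linearly independent `A, Y₁, Y₂ ∈ 𝔤` with `⁅A,Y₁⁆ = Y₁ + βY₂`,
`⁅A,Y₂⁆ = −βY₁ + Y₂` and `⁅Y₁,Y₂⁆ = 0`. -/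
theorem subalgebra_of_not_type_R
    {L : Type*} [LieRing L] [LieAlgebra ℝ L] [FiniteDimensional ℝ L]
    (h : ∃ (X : L) (μ : ℂ), μ.re ≠ 0 ∧
      Module.End.HasEigenvalue (LinearMap.baseChange ℂ (LieAlgebra.ad ℝ L X)) μ) :
    (∃ A Y : L, Y ≠ 0 ∧ ⁅A, Y⁆ = Y) ∨
      (∃ (β : ℝ) (A Y₁ Y₂ : L), β ≠ 0 ∧ LinearIndependent ℝ ![A, Y₁, Y₂] ∧
        ⁅A, Y₁⁆ = Y₁ + β • Y₂ ∧ ⁅A, Y₂⁆ = (-β) • Y₁ + Y₂ ∧ ⁅Y₁, Y₂⁆ = 0) := by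
  obtain ⟨X, μ, hμ, hev⟩ := h
  obtain ⟨z, hz⟩ := hev.exists_hasEigenvector
  have hz0 := hz.2
  have hzμ := hz.apply_eq_smul
  have h1 : ⁅X, part Complex.reLm z⁆ =
      μ.re • part Complex.reLm z - μ.im • part Complex.imLm z := by
    rw [← part_re_smul, ← hzμ, part_baseChange, LieAlgebra.ad_apply]
  have h2 : ⁅X, part Complex.imLm z⁆ =
      μ.im • part Complex.reLm z + μ.re • part Complex.imLm z := by
    rw [← part_im_smul, ← hzμ, part_baseChange, LieAlgebra.ad_apply]
  have h3 : ¬ (part Complex.reLm z = 0 ∧ part Complex.imLm z = 0) := by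
    rintro ⟨ha, hb⟩
    apply hz0
    rw [part_decomp z, ha, hb]; simp
  generalize part Complex.reLm z = Y₁ at h1 h2 h3
  generalize part Complex.imLm z = Y₂ at h1 h2 h3
  obtain ⟨β, hβ⟩ : ∃ β : ℝ, β = -(μ.re⁻¹ * μ.im) := ⟨_, rfl⟩
  obtain ⟨A, hA⟩ : ∃ A : L, A = μ.re⁻¹ • X := ⟨_, rfl⟩
  have k1 : ⁅A, Y₁⁆ = Y₁ + β • Y₂ := by
    rw [hA, smul_lie, h1, smul_sub, smul_smul, smul_smul, inv_mul_cancel₀ hμ, hβ]; module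
  have k2 : ⁅A, Y₂⁆ = (-β) • Y₁ + Y₂ := by
    rw [hA, smul_lie, h2, smul_add, smul_smul, smul_smul, inv_mul_cancel₀ hμ, hβ]; module
  clear hA hβ h1 h2
  by_cases hb : β = 0
  · left
    subst hb
    by_cases hY : Y₁ = 0
    · exact ⟨A, Y₂, fun h => h3 ⟨hY, h⟩, by simpa using k2⟩
    · exact ⟨A, Y₁, hY, by simpa using k1⟩
  by_cases hW : ⁅Y₁, Y₂⁆ = 0
  swap
  · left
    refine ⟨(2⁻¹ : ℝ) • A, ⁅Y₁, Y₂⁆, hW, ?_⟩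
    rw [smul_lie, leibniz_lie, k1, k2]
    simp only [add_lie, lie_add, smul_lie, lie_smul, lie_self]
    module
  right
  refine ⟨β, A, Y₁, Y₂, hb, ?_, k1, k2, hW⟩
  have hW' : ⁅Y₂, Y₁⁆ = 0 := by rw [← lie_skew, hW, neg_zero]
  rw [Fintype.linearIndependent_iff]
  intro g hg
  simp only [Fin.sum_univ_three, Matrix.cons_val] at hg
  have r1 : g 0 • (Y₁ + β • Y₂) = 0 := by
    have := congrArg (fun w => ⁅w, Y₁⁆) hg
    simpa [k1, hW'] using this
  have r2 : g 0 • ((-β) • Y₁ + Y₂) = 0 := by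
    have := congrArg (fun w => ⁅w, Y₂⁆) hg
    simpa only [add_lie, smul_lie, k2, hW, lie_self, smul_zero, add_zero, zero_lie] using this
  have g0 : g 0 = 0 := by
    by_contra hne
    have r1' := (smul_eq_zero.mp r1).resolve_left hne
    have r2' := (smul_eq_zero.mp r2).resolve_left hne
    rcases eq_zero_pair (s := 1) (t := β) (by rwa [one_smul]) (by rwa [one_smul]) with h | h
    · exact one_ne_zero h.1
    · exact h3 h
  rw [g0, zero_smul, zero_add] at hg
  have r3 : (-(g 2)) • Y₁ + g 1 • Y₂ = 0 := by
    have := congrArg (fun w => ⁅A, w⁆) hg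
    simp only [lie_add, lie_smul, k1, k2, lie_zero] at this
    have e : β • ((-(g 2)) • Y₁ + g 1 • Y₂) = 0 := by
      have e' : β • ((-(g 2)) • Y₁ + g 1 • Y₂) =
        (g 1 • (Y₁ + β • Y₂) + g 2 • ((-β) • Y₁ + Y₂)) - (g 1 • Y₁ + g 2 • Y₂) := by module
      rw [e', this, hg, sub_zero]
    exact (smul_eq_zero.mp e).resolve_left hb
  rcases eq_zero_pair hg r3 with h | h
  · intro i
    fin_cases i
    · exact g0
    · exact h.1
    · exact h.2
  · exact absurd h h3

end Stmt17
end
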